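/- Let n ≥ 1, d ∈ ℝ^n with d > 0 entrywise, y ∈ ℝ^n, and σ, τ ∈ S_n with y_{τ(1)}/d_{τ(1)} > y_{τ(2)}/d_{τ(2)} > … > y_{τ(n)}/d_{τ(n)} (in particular the map i ↦ y_i/d_i is injective). If A is any d-stochastic matrix with A·y = E_{d,y}(σ), then A = A_{στ}; i.e., A_{στ} is the unique d-stochastic matrix mapping y to the extreme point E_{d,y}(σ). -/

import Mathlib

open Finset

noncomputable def th {n : ℕ} (d y : Fin n → ℝ) (c : ℝ) : ℝ :=
  sInf ((fun i => (∑ j, max (y j - y i / d i * d j) 0) + y i / d i * c) ''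
    {i : Fin n | 0 < d i})

noncomputable def psum {n : ℕ} (d : Fin n → ℝ) (σ : Equiv.Perm (Fin n)) (j : ℕ) : ℝ :=
  ∑ i ∈ Finset.univ.filter (fun i : Fin n => (i : ℕ) < j), d (σ i)

noncomputable def Emap {n : ℕ} (d y : Fin n → ℝ) (σ : Equiv.Perm (Fin n)) : Fin n → ℝ :=
  fun k => th d y (psum d σ ((σ.symm k : ℕ) + 1)) - th d y (psum d σ (σ.symm k : ℕ))

def dStoch {n : ℕ} (d : Fin n → ℝ) (A : Matrix (Fin n) (Fin n) ℝ) : Prop :=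
  (∀ i j, 0 ≤ A i j) ∧ (∀ j, ∑ i, A i j = 1) ∧ A.mulVec d = d

def Mset {n : ℕ} (d y : Fin n → ℝ) : Set (Fin n → ℝ) :=
  {x | ∃ A : Matrix (Fin n) (Fin n) ℝ, dStoch d A ∧ A.mulVec y = x}

noncomputable def Aentry {n : ℕ} (d : Fin n → ℝ) (σ τ : Equiv.Perm (Fin n))
    (α : ℕ → Fin n) (j k : Fin n) : ℝ :=
  if k = α j.val ∧ (α j.val).val < (α (j.val + 1)).val then
    (psum d τ ((α j.val).val + 1) - psum d σ j.val) / d (τ (α j.val))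
  else if (α j.val).val < k.val ∧ k.val < (α (j.val + 1)).val then 1
  else if (α j.val).val < (α (j.val + 1)).val ∧ k = α (j.val + 1) then
    (psum d σ (j.val + 1) - psum d τ (α (j.val + 1)).val) / d (τ (α (j.val + 1)))
  else if α j.val = α (j.val + 1) ∧ k = α (j.val + 1) then
    d (σ j) / d (τ (α (j.val + 1)))
  else 0

noncomputable def Amat {n : ℕ} (d : Fin n → ℝ) (σ τ : Equiv.Perm (Fin n))
    (α : ℕ → Fin n) : Matrix (Fin n) (Fin n) ℝ :=
  Matrix.of fun p q => Aentry d σ τ α (σ.symm p) (τ.symm q)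

/-!
Fix `j` and add up the rows `σ 1, …, σ j` of `A`. Since `A` is column stochastic and fixes `d`, the
resulting vector `c` satisfies `0 ≤ c ≤ 1` and `∑ c_k d_k = d_{σ 1} + ⋯ + d_{σ j}`, and `A y = E(σ)`
says that `∑ c_k y_k` is the value of the thermomajorization curve there. That value is the optimum
of a fractional knapsack problem: maximise `∑ c_k y_k` over `0 ≤ c ≤ 1` with `∑ c_k d_k` prescribed.
Because the ratios `y_k / d_k` are pairwise distinct, the only optimiser is the greedy one, which
fills the items in the order `τ`. So all partial row sums of `A` are determined, hence so is `A`,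
and subtracting consecutive greedy fillings gives the entries of `A_{στ}`.
-/

section GreedyFill

variable {ι 𝕜 : Type*} [Fintype ι] [LinearOrder ι] [Field 𝕜]

/-- The greedy solution of the fractional knapsack problem with weights `w` and capacity `s`: the
items before `i` are taken fully, those after `i` not at all, and `i` itself in the proportion that
makes the total weight equal to `s`. The break item `i` is a parameter, so the proportion lies in
`[0, 1]` only if `s` lies between the total weights before and after `i`. -/
def greedyFill (w : ι → 𝕜) (s : 𝕜) (i k : ι) : 𝕜 :=
  if k < i then 1 else if k = i then (s - ∑ j with j < i, w j) / w i else 0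

lemma greedyFill_of_lt (w : ι → 𝕜) (s : 𝕜) {i k : ι} (h : k < i) : greedyFill w s i k = 1 :=
  if_pos h

lemma greedyFill_self (w : ι → 𝕜) (s : 𝕜) (i : ι) :
    greedyFill w s i i = (s - ∑ j with j < i, w j) / w i := by
  simp [greedyFill]

lemma greedyFill_of_gt (w : ι → 𝕜) (s : 𝕜) {i k : ι} (h : i < k) : greedyFill w s i k = 0 := by
  simp [greedyFill, h.not_gt, h.ne']

lemma sum_greedyFill_mul (w : ι → 𝕜) (s : 𝕜) {i : ι} (hw : w i ≠ 0) :
    ∑ k, greedyFill w s i k * w k = s := by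
  have split_at_break : ∀ k, greedyFill w s i k * w k =
      (if k < i then w k else 0) + if k = i then s - ∑ j with j < i, w j else 0 := by
    intro k
    rcases lt_trichotomy k i with h | rfl | h
    · simp [greedyFill_of_lt w s h, h, h.ne]
    · simp [greedyFill_self, div_mul_cancel₀ _ hw]
    · simp [greedyFill_of_gt w s h, h.not_gt, h.ne']
  rw [sum_congr rfl fun k _ => split_at_break k, sum_add_distrib, ← sum_filter,
    Fintype.sum_ite_eq', add_sub_cancel]

variable [LinearOrder 𝕜] [IsStrictOrderedRing 𝕜]

lemma greedyFill_mem_Icc {w : ι → 𝕜} {s : 𝕜} {i : ι} (hw : 0 < w i)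
    (hs : s ∈ Set.Icc (∑ j with j < i, w j) (∑ j with j < i, w j + w i)) (k : ι) :
    greedyFill w s i k ∈ Set.Icc 0 1 := by
  rcases lt_trichotomy k i with h | rfl | h
  · simp [greedyFill_of_lt w s h]
  · rw [greedyFill_self]
    exact ⟨div_nonneg (sub_nonneg.2 hs.1) hw.le,
      (div_le_one hw).2 (sub_le_iff_le_add'.2 hs.2)⟩
  · simp [greedyFill_of_gt w s h]

lemma greedyFill_sub_mul_nonneg {w v c : ι → 𝕜} (hw : ∀ k, 0 < w k)
    (hv : Antitone fun k => v k / w k) (hc : ∀ k, c k ∈ Set.Icc 0 1) (s : 𝕜) (i k : ι) :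
    0 ≤ (greedyFill w s i k - c k) * (v k - v i / w i * w k) := by
  rcases lt_trichotomy k i with h | rfl | h
  · rw [greedyFill_of_lt w s h]
    exact mul_nonneg (sub_nonneg.2 (hc k).2)
      (sub_nonneg.2 ((le_div_iff₀ (hw k)).1 (hv h.le)))
  · rw [div_mul_cancel₀ _ (hw k).ne', sub_self, mul_zero]
  · rw [greedyFill_of_gt w s h]
    exact mul_nonneg_of_nonpos_of_nonpos (sub_nonpos.2 (hc k).1)
      (sub_nonpos.2 ((div_le_iff₀ (hw k)).1 (hv h.le)))

theorem eq_greedyFill_of_sum_mul_le {w v c : ι → 𝕜} {s : 𝕜} {i : ι} (hw : ∀ k, 0 < w k)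
    (hv : StrictAnti fun k => v k / w k) (hc : ∀ k, c k ∈ Set.Icc 0 1)
    (hcw : ∑ k, c k * w k = s)
    (hcv : ∑ k, greedyFill w s i k * v k ≤ ∑ k, c k * v k) : c = greedyFill w s i := by
  set g := greedyFill w s i
  have hgw : ∑ k, g k * w k = s := sum_greedyFill_mul w s (hw i).ne'
  have gain_nonneg : ∀ k, 0 ≤ (g k - c k) * (v k - v i / w i * w k) :=
    greedyFill_sub_mul_nonneg hw hv.antitone hc s i
  have sum_gain : ∑ k, (g k - c k) * (v k - v i / w i * w k) ≤ 0 := calc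
    _ = ∑ k, g k * v k - ∑ k, c k * v k
          - v i / w i * (∑ k, g k * w k - ∑ k, c k * w k) := by
      simp only [← sum_sub_distrib, mul_sum]
      exact sum_congr rfl fun k _ => by ring
    _ ≤ 0 := by rw [hgw, hcw]; linarith
  have gain_eq_zero : ∀ k, (g k - c k) * (v k - v i / w i * w k) = 0 := fun k =>
    (sum_eq_zero_iff_of_nonneg fun k _ => gain_nonneg k).1
      (sum_gain.antisymm (sum_nonneg fun k _ => gain_nonneg k)) k (mem_univ k)
  have eq_off_break : ∀ k, k ≠ i → g k - c k = 0 := fun k hk =>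
    (mul_eq_zero.1 (gain_eq_zero k)).resolve_right fun h =>
      hk (hv.injective ((div_eq_iff (hw k).ne').2 (sub_eq_zero.1 h)))
  have eq_at_break : g i - c i = 0 := by
    have h : ∑ k, (g k - c k) * w k = 0 := by
      simp only [sub_mul, sum_sub_distrib, hgw, hcw, sub_self]
    rw [Fintype.sum_eq_single i fun k hk => by rw [eq_off_break k hk, zero_mul]] at h
    exact (mul_eq_zero.1 h).resolve_right (hw i).ne'
  funext k
  rcases eq_or_ne k i with rfl | hk
  · exact (sub_eq_zero.1 eq_at_break).symm
  · exact (sub_eq_zero.1 (eq_off_break k hk)).symm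

end GreedyFill

section PartialSums

variable {n : ℕ} (x : Fin n → ℝ) (σ : Equiv.Perm (Fin n))

lemma psum_zero : psum x σ 0 = 0 := by
  simp [psum]

lemma psum_succ (i : Fin n) : psum x σ (i + 1) = psum x σ i + x (σ i) := by
  have h : univ.filter (fun k : Fin n => (k : ℕ) < i + 1) =
      insert i (univ.filter fun k : Fin n => (k : ℕ) < i) := by
    ext k
    simp only [mem_filter, mem_univ, true_and, mem_insert, Fin.ext_iff]
    omega
  rw [psum, h, sum_insert (by simp), add_comm, psum]

lemma psum_eq_sum : psum x σ n = ∑ i, x i := by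
  simp [psum, Equiv.sum_comp σ x]

variable {x}

lemma psum_mono (hx : ∀ i, 0 ≤ x i) : Monotone (psum x σ) := fun _ _ hab =>
  sum_le_sum_of_subset_of_nonneg (monotone_filter_right _ fun _ _ hi => hi.trans_le hab)
    fun _ _ _ => hx _

lemma psum_lt_psum_succ (hx : ∀ i, 0 < x i) (i : Fin n) : psum x σ i < psum x σ (i + 1) := by
  rw [psum_succ]
  exact lt_add_of_pos_right _ (hx _)

lemma le_of_psum_lt_psum_succ (hx : ∀ i, 0 ≤ x i) {a b : ℕ} (h : psum x σ a < psum x σ (b + 1)) :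
    a ≤ b :=
  Nat.lt_succ_iff.1 ((psum_mono σ hx).reflect_lt h)

lemma psum_mem_Icc (hx : ∀ i, 0 ≤ x i) (j : ℕ) : psum x σ j ∈ Set.Icc 0 (∑ i, x i) :=
  ⟨sum_nonneg fun _ _ => hx _,
    (sum_le_univ_sum_of_nonneg fun _ => hx _).trans_eq (Equiv.sum_comp σ x)⟩

lemma sum_psum_col_mul (A : Matrix (Fin n) (Fin n) ℝ) (v : Fin n → ℝ) (j : ℕ) :
    ∑ q, psum (A.col q) σ j * v q = psum (A.mulVec v) σ j := by
  simp only [psum, sum_mul]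
  exact sum_comm

end PartialSums

section ThermomajorizationCurve

variable {n : ℕ} {d : Fin n → ℝ} (y : Fin n → ℝ)

lemma sum_mul_le_th (hd : ∃ i, 0 < d i) {c : Fin n → ℝ} (hc : ∀ k, c k ∈ Set.Icc 0 1) :
    ∑ k, c k * y k ≤ th d y (∑ k, c k * d k) := by
  refine le_csInf (Set.Nonempty.image _ hd) ?_
  rintro _ ⟨i, -, rfl⟩
  simp only [mul_sum, ← sum_add_distrib]
  refine sum_le_sum fun k _ => ?_
  set r := y i / d i
  have excess_le : c k * (y k - r * d k) ≤ max (y k - r * d k) 0 := calc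
    c k * (y k - r * d k) ≤ c k * max (y k - r * d k) 0 :=
      mul_le_mul_of_nonneg_left (le_max_left _ _) (hc k).1
    _ ≤ max (y k - r * d k) 0 := mul_le_of_le_one_left (le_max_right _ _) (hc k).2
  linarith

lemma th_zero [Nonempty (Fin n)] (hd : ∀ i, 0 < d i) : th d y 0 = 0 := by
  obtain ⟨i, hi⟩ := Finite.exists_max fun i => y i / d i
  refine le_antisymm ?_ ?_
  · refine csInf_le (Set.toFinite _).bddBelow ⟨i, hd i, ?_⟩
    simp only [mul_zero, add_zero]
    exact sum_eq_zero fun j _ =>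
      max_eq_right (sub_nonpos.2 ((div_le_iff₀ (hd j)).1 (hi j)))
  · simpa using sum_mul_le_th y ⟨i, hd i⟩ (c := 0) fun _ => by simp

lemma psum_Emap [Nonempty (Fin n)] (hd : ∀ i, 0 < d i) (σ : Equiv.Perm (Fin n)) {j : ℕ}
    (hj : j ≤ n) : psum (Emap d y σ) σ j = th d y (psum d σ j) := by
  induction j with
  | zero => rw [psum_zero, psum_zero, th_zero y hd]
  | succ j ih =>
    have h := psum_succ (Emap d y σ) σ ⟨j, hj⟩
    simpa [Emap, ih (Nat.le_of_succ_le hj)] using h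

lemma sum_greedyFill_mul_le_th {τ : Equiv.Perm (Fin n)} {i : Fin n} (hi : 0 < d (τ i)) {s : ℝ}
    (hs : s ∈ Set.Icc (psum d τ i) (psum d τ (i + 1))) :
    ∑ k, greedyFill (d ∘ τ) s i k * y (τ k) ≤ th d y s := by
  have fill_mem : ∀ k, greedyFill (d ∘ τ) s i k ∈ Set.Icc 0 1 :=
    greedyFill_mem_Icc hi (psum_succ d τ i ▸ hs)
  have h := sum_mul_le_th y ⟨τ i, hi⟩ fun q => fill_mem (τ.symm q)
  rw [← Equiv.sum_comp τ, ← Equiv.sum_comp τ fun q => _ * d q] at h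
  simp only [Equiv.symm_apply_apply] at h
  exact h.trans_eq (congrArg (th d y) (sum_greedyFill_mul (d ∘ τ) s hi.ne'))

end ThermomajorizationCurve

section Uniqueness

variable {n : ℕ} {d : Fin n → ℝ} {σ τ : Equiv.Perm (Fin n)}

lemma psum_col_eq_greedyFill {y : Fin n → ℝ} {A : Matrix (Fin n) (Fin n) ℝ} {i : Fin n} {j : ℕ}
    (hd : ∀ i, 0 < d i) (hτ : StrictAnti fun k => y (τ k) / d (τ k)) (hA : dStoch d A)
    (hAy : A.mulVec y = Emap d y σ) (hj : j ≤ n)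
    (hi : psum d σ j ∈ Set.Icc (psum d τ i) (psum d τ (i + 1))) (k : Fin n) :
    psum (A.col (τ k)) σ j = greedyFill (d ∘ τ) (psum d σ j) i k := by
  obtain ⟨hA0, hA1, hAd⟩ := hA
  have : Nonempty (Fin n) := ⟨i⟩
  set c : Fin n → ℝ := fun q => psum (A.col q) σ j
  have hc : ∀ q, c q ∈ Set.Icc 0 1 := fun q => by
    rw [← hA1 q]
    exact psum_mem_Icc σ (fun p => hA0 p q) j
  have hcd : ∑ k, c (τ k) * d (τ k) = psum d σ j := by
    rw [Equiv.sum_comp τ fun q => c q * d q, sum_psum_col_mul, hAd]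
  have hcy : ∑ k, c (τ k) * y (τ k) = th d y (psum d σ j) := by
    rw [Equiv.sum_comp τ fun q => c q * y q, sum_psum_col_mul, hAy, psum_Emap y hd σ hj]
  have greedy_le : ∑ k, greedyFill (d ∘ τ) (psum d σ j) i k * y (τ k) ≤ ∑ k, c (τ k) * y (τ k) :=
    hcy ▸ sum_greedyFill_mul_le_th y (hd (τ i)) hi
  exact congrFun (eq_greedyFill_of_sum_mul_le (w := d ∘ τ) (v := y ∘ τ) (c := c ∘ τ)
    (fun k => hd (τ k)) hτ (fun k => hc (τ k)) hcd greedy_le) k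

lemma psum_mem_Icc_psum {α : ℕ → Fin n} (hd : ∀ i, 0 ≤ d i) (hα0 : (α 0).val = 0)
    (hαn : (α n).val = n - 1)
    (hα : ∀ j : ℕ, 1 ≤ j → j ≤ n - 1 →
      psum d σ j ∈ Set.Icc (psum d τ (α j)) (psum d τ (α j + 1)))
    {j : ℕ} (hj : j ≤ n) : psum d σ j ∈ Set.Icc (psum d τ (α j)) (psum d τ (α j + 1)) := by
  rcases Nat.eq_zero_or_pos j with rfl | hj0
  · rw [hα0, psum_zero, psum_zero]
    exact ⟨le_rfl, (psum_mem_Icc τ hd _).1⟩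
  rcases hj.eq_or_lt with rfl | hjn
  · rw [hαn, Nat.sub_add_cancel hj0, psum_eq_sum d σ, psum_eq_sum d τ]
    exact ⟨(psum_mem_Icc τ hd _).2, le_rfl⟩
  · exact hα j hj0 (Nat.le_sub_one_of_lt hjn)

lemma greedyFill_sub_greedyFill_eq_Aentry {α : ℕ → Fin n} (hd : ∀ i, d i ≠ 0) {j : Fin n}
    (hα : α j ≤ α (j + 1)) (k : Fin n) :
    greedyFill (d ∘ τ) (psum d σ (j + 1)) (α (j + 1)) k -
      greedyFill (d ∘ τ) (psum d σ j) (α j) k = Aentry d σ τ α j k := by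
  have fill_break : ∀ (s : ℝ) (i : Fin n),
      greedyFill (d ∘ τ) s i i = (s - psum d τ i) / d (τ i) := greedyFill_self (d ∘ τ)
  unfold Aentry
  generalize α (j + 1) = b at *
  generalize α j = a at *
  rcases hα.eq_or_lt with rfl | hab
  · rcases lt_trichotomy k a with h | rfl | h
    · simp [greedyFill_of_lt _ _ h, h.ne, h.le]
    · simp only [fill_break, psum_succ d σ j, lt_irrefl, and_false, and_self, if_false, if_true]
      rw [← sub_div]
      congr 1
      ring
    · simp [greedyFill_of_gt _ _ h, h.ne', h.le]
  rcases lt_trichotomy k a with h | rfl | h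
  · simp [greedyFill_of_lt _ _ h, greedyFill_of_lt _ _ (h.trans hab), h.ne, h.le,
      (h.trans hab).ne]
  · simp only [fill_break, greedyFill_of_lt _ _ hab, Fin.val_fin_lt, hab, and_self, if_true,
      psum_succ d τ k]
    field_simp [hd (τ k)]
    ring
  rcases lt_trichotomy k b with h' | rfl | h'
  · simp [greedyFill_of_gt _ _ h, greedyFill_of_lt _ _ h', h, h', h.ne']
  · simp [greedyFill_of_gt _ _ h, fill_break, h, h.ne']
  · simp [greedyFill_of_gt _ _ h, greedyFill_of_gt _ _ h', h.ne', h'.ne', h'.le]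

end Uniqueness

/-- If y/d is strictly decreasingly sorted by τ, then A_{στ} is the unique
d-stochastic matrix mapping y to the extreme point E_{d,y}(σ). -/
theorem stmt7 (n : ℕ) (hn : 1 ≤ n) (d : Fin n → ℝ) (hd : ∀ i, 0 < d i)
    (y : Fin n → ℝ) (σ τ : Equiv.Perm (Fin n))
    (hτ : StrictAnti (fun j : Fin n => y (τ j) / d (τ j)))
    (α : ℕ → Fin n)
    (hα0 : (α 0).val = 0) (hαn : (α n).val = n - 1)
    (hα : ∀ j : ℕ, 1 ≤ j → j ≤ n - 1 →
      psum d τ (α j).val < psum d σ j ∧ psum d σ j ≤ psum d τ ((α j).val + 1))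
    (A : Matrix (Fin n) (Fin n) ℝ) (hA : dStoch d A)
    (hAy : A.mulVec y = Emap d y σ) :
    A = Amat d σ τ α := by
  have bracket : ∀ j ≤ n, psum d σ j ∈ Set.Icc (psum d τ (α j)) (psum d τ (α j + 1)) := fun _ =>
    psum_mem_Icc_psum (fun i => (hd i).le) hα0 hαn fun j h1 hj =>
      Set.Ioc_subset_Icc_self (hα j h1 hj)
  have α_le_succ : ∀ j : Fin n, α j ≤ α (j + 1) := fun j =>
    le_of_psum_lt_psum_succ τ (fun i => (hd i).le) <|
      (bracket j j.isLt.le).1.trans_lt <|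
        (psum_lt_psum_succ σ hd j).trans_le (bracket (j + 1) j.isLt).2
  ext p q
  obtain ⟨j, rfl⟩ := σ.surjective p
  obtain ⟨k, rfl⟩ := τ.surjective q
  calc A (σ j) (τ k)
    _ = psum (A.col (τ k)) σ (j + 1) - psum (A.col (τ k)) σ j := by
      rw [psum_succ, add_sub_cancel_left, Matrix.col_apply]
    _ = greedyFill (d ∘ τ) (psum d σ (j + 1)) (α (j + 1)) k -
          greedyFill (d ∘ τ) (psum d σ j) (α j) k := by
      rw [psum_col_eq_greedyFill hd hτ hA hAy j.isLt (bracket _ j.isLt),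
        psum_col_eq_greedyFill hd hτ hA hAy j.isLt.le (bracket _ j.isLt.le)]
    _ = Aentry d σ τ α j k :=
      greedyFill_sub_greedyFill_eq_Aentry (fun i => (hd i).ne') (α_le_succ j) k
    _ = Amat d σ τ α (σ j) (τ k) := by simp [Amat]
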